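/- arXiv:1511.05090 — 3 statements merged into one kernel-verified Lean document; each statement's English description precedes it below -/
import Mathlib

section
/- Let ρ be a d×d complex density matrix, let n ≥ 1, let y > 1 be a real number, and let Σ ⊆ {1,…,n} with |Σ| = k. For every Hermitian A ∈ T_Σ, the coarse-grained squImageared Bures norm under D_y^⊗n satisfies ‖A‖²_{D_y^⊗n} ≤ d^k · y^(−2k) · (1 − y⁻¹)^(−k) · Tr(ρ^⊗n · A · A). -/
open scoped ComplexOrder
open Matrix

noncomputable section

/-- The `n`-fold tensor power of a `d×d` matrix, on sites indexed by `Fin n → Fin d`: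
`(ρ^{⊗n})(x,z) = ∏ i, ρ (x i) (z i)`. -/
def tensorPow (d n : ℕ) (ρ : Matrix (Fin d) (Fin d) ℂ) :
    Matrix (Fin n → Fin d) (Fin n → Fin d) ℂ :=
  fun x z => ∏ i, ρ (x i) (z i)

/-- Tensor product `A₁ ⊗ ⋯ ⊗ Aₙ` of single-site matrices. -/
def siteProd (d n : ℕ) (A : Fin n → Matrix (Fin d) (Fin d) ℂ) :
    Matrix (Fin n → Fin d) (Fin n → Fin d) ℂ :=
  fun x z => ∏ i, A i (x i) (z i)

/-- `Ω_σ(A) = (σA + Aσ)/2`. -/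
def Omega {m : Type*} [Fintype m] (σ A : Matrix m m ℂ) : Matrix m m ℂ :=
  (1 / 2 : ℂ) • (σ * A + A * σ)

/-- The depolarizing channel `D_y(A) = y⁻¹ A + (1 - y⁻¹) (Tr A / d) I` applied to site `i`
of an `n`-site matrix. -/
def depolSite (d n : ℕ) (y : ℝ) (i : Fin n)
    (M : Matrix (Fin n → Fin d) (Fin n → Fin d) ℂ) :
    Matrix (Fin n → Fin d) (Fin n → Fin d) ℂ :=
  fun x z => ((y⁻¹ : ℝ) : ℂ) * M x z +
    ((1 - y⁻¹ : ℝ) : ℂ) / (d : ℂ) *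
      (if x i = z i then ∑ a : Fin d, M (Function.update x i a) (Function.update z i a) else 0)

/-- `D_y^{⊗n}`: the depolarizing channel applied to every one of the `n` sites. -/
def depolPow (d n : ℕ) (y : ℝ) :
    Matrix (Fin n → Fin d) (Fin n → Fin d) ℂ → Matrix (Fin n → Fin d) (Fin n → Fin d) ℂ :=
  (List.finRange n).foldr (fun i f => depolSite d n y i ∘ f) id

/-- `T_Σ`: the linear span of operators acting as `aᵢ` with `Tr(ρ aᵢ) = 0` on each site
`i ∈ S` and as the identity on all other sites. -/
def TS (d n : ℕ) (ρ : Matrix (Fin d) (Fin d) ℂ) (S : Finset (Fin n)) :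
    Submodule ℂ (Matrix (Fin n → Fin d) (Fin n → Fin d) ℂ) :=
  Submodule.span ℂ {M | ∃ a : Fin n → Matrix (Fin d) (Fin d) ℂ,
    (∀ i ∈ S, (ρ * a i).trace = 0) ∧ (∀ i ∉ S, a i = 1) ∧ M = siteProd d n a}

/-- The permutation unitary `U_π`, with entries `(U_π)_{x,y} = 1` iff `x = y ∘ π⁻¹`. -/
def permU (d n : ℕ) (π : Equiv.Perm (Fin n)) :
    Matrix (Fin n → Fin d) (Fin n → Fin d) ℂ :=
  fun x z => if x = z ∘ ⇑π⁻¹ then 1 else 0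

/-- The symmetrizing channel `P(A) = (1/n!) ∑_π U_π A U_π†`. -/
def symmetrize (d n : ℕ) (A : Matrix (Fin n → Fin d) (Fin n → Fin d) ℂ) :
    Matrix (Fin n → Fin d) (Fin n → Fin d) ℂ :=
  ((n.factorial : ℂ))⁻¹ • ∑ π : Equiv.Perm (Fin n), permU d n π * A * (permU d n π)ᴴ

/-- Vertex operator `G_α^{(n)} = (I + (i/√n)α)^{⊗n}`. -/
def GVertex (d n : ℕ) (α : Matrix (Fin d) (Fin d) ℂ) :
    Matrix (Fin n → Fin d) (Fin n → Fin d) ℂ :=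
  tensorPow d n (1 + (Complex.I / (Real.sqrt n : ℂ)) • α)

/-!
Write `σ = D_y(ρ)` and `A ∈ T_Σ`. On the sites of `Σ` the factors of `A` have zero mean, so there
the channel only rescales by `y⁻¹`, whereas off `Σ` it turns `ρ` into `σ`; hence
`D_y^{⊗n}(Ω_{ρ^{⊗n}}(A)) = y^{-k} Ω_P(A)`, where `P` is `ρ` on `Σ` and `σ` off `Σ`. Factor
`P = W R`, where `W` is `σ` off `Σ` and `R` is `ρ` on `Σ`. The matrix `W` commutes with `R` and `A`,
and `R ≤ 1` because `ρ` has trace one. As `σ ≥ c` with `c = (1 - y⁻¹) / d`, the matrix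
`σ^{⊗n}` dominates `c ^ k • W`. The form `C ↦ Tr(W C R C)` is nonnegative on Hermitian matrices,
and evaluating it at `B - t A` with `t = y^{-k} c^{-k}` bounds `Tr(Ω_{σ^{⊗n}}(B) B)` by
`y^{-2k} c^{-k} Tr(W R A A)`. Finally `Tr(W R A A) = Tr(ρ^{⊗n} A A)`, since `A` acts trivially off
`Σ` and `σ` has the same trace as `ρ`.
-/

open scoped MatrixOrder

section Matrix

variable {m 𝕜 : Type*} [Fintype m] [RCLike 𝕜]

theorem trace_mul_nonneg {P Q : Matrix m m 𝕜} (hP : 0 ≤ P) (hQ : 0 ≤ Q) : 0 ≤ (P * Q).trace := by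
  classical
  obtain ⟨b, rfl⟩ := CStarAlgebra.nonneg_iff_eq_star_mul_self.mp hP
  rw [Matrix.mul_assoc, trace_mul_comm]
  exact (hQ.posSemidef.mul_mul_conjTranspose_same b).trace_nonneg

theorem trace_mul_le_trace_mul_left {P Q R : Matrix m m 𝕜} (hP : 0 ≤ P) (hQR : Q ≤ R) :
    (P * Q).trace ≤ (P * R).trace := by
  rw [← sub_nonneg, ← trace_sub, ← Matrix.mul_sub]
  exact trace_mul_nonneg hP (sub_nonneg.mpr hQR)

theorem trace_mul_le_trace_mul_right {P Q R : Matrix m m 𝕜} (hP : 0 ≤ P) (hQR : Q ≤ R) :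
    (Q * P).trace ≤ (R * P).trace := by
  simpa only [trace_mul_comm _ P] using trace_mul_le_trace_mul_left hP hQR

theorem le_trace_smul_one [DecidableEq m] {P : Matrix m m 𝕜} (hP : 0 ≤ P) : P ≤ P.trace • 1 := by
  have hH := hP.posSemidef.isHermitian
  have : P ≤ algebraMap ℝ _ (∑ i, hH.eigenvalues i) := by
    rw [le_algebraMap_iff_spectrum_le hH, hH.spectrum_real_eq_range_eigenvalues]
    rintro _ ⟨i, rfl⟩
    exact Finset.single_le_sum (fun j _ ↦ hP.posSemidef.eigenvalues_nonneg j) (Finset.mem_univ i)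
  rwa [Algebra.algebraMap_eq_smul_one, RCLike.real_smul_eq_coe_smul (K := 𝕜), RCLike.ofReal_sum,
    ← hH.trace_eq_sum_eigenvalues] at this

end Matrix

section Omega

variable {m : Type*} [Fintype m]

theorem isLinearMap_Omega (σ : Matrix m m ℂ) : IsLinearMap ℂ (Omega σ) where
  map_add A B := by simp only [Omega, Matrix.mul_add, Matrix.add_mul]; module
  map_smul c A := by simp only [Omega, Matrix.mul_smul, Matrix.smul_mul]; module

theorem trace_Omega_mul (σ A B : Matrix m m ℂ) :
    (Omega σ A * B).trace = 1 / 2 * ((σ * A * B).trace + (A * σ * B).trace) := by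
  simp only [Omega, Matrix.smul_mul, Matrix.add_mul, trace_smul, trace_add, smul_eq_mul]

theorem trace_Omega_mul_self (σ B : Matrix m m ℂ) :
    (Omega σ B * B).trace = (σ * (B * B)).trace := by
  rw [trace_Omega_mul, trace_mul_cycle B, trace_mul_cycle B, Matrix.mul_assoc]
  ring

/-- Nonnegativity of `Tr(W (B - t A) R (B - t A))`, expanded. -/
theorem two_mul_trace_Omega_mul_le {W R A B : Matrix m m ℂ} (hW : 0 ≤ W) (hR : 0 ≤ R)
    (hWR : Commute W R) (hWA : Commute W A) (hA : A.IsHermitian) (hB : B.IsHermitian) (t : ℝ) :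
    2 * t * (Omega (W * R) A * B).trace
      ≤ (W * (B * R * B)).trace + t ^ 2 * (W * R * A * A).trace := by
  have hBRA : (W * (B * R * A)).trace = (W * R * A * B).trace := by
    rw [hWR.eq, Matrix.mul_assoc R, hWA.eq, trace_mul_comm, trace_mul_comm _ B]
    simp only [Matrix.mul_assoc]
  have hARX (X : Matrix m m ℂ) : (W * (A * R * X)).trace = (A * (W * R) * X).trace := by
    simp only [← Matrix.mul_assoc, hWA.eq]
  have hARA : (A * (W * R) * A).trace = (W * R * A * A).trace := by
    rw [trace_mul_cycle, trace_mul_comm, Matrix.mul_assoc _ A]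
  have hquad : 0 ≤ (W * ((B - (t : ℂ) • A) * R * (B - (t : ℂ) • A))).trace := by
    have hH : (B - (t : ℂ) • A)ᴴ = B - (t : ℂ) • A := by
      simp [hA.eq, hB.eq]
    refine trace_mul_nonneg hW ?_
    simpa only [hH] using (hR.posSemidef.mul_mul_conjTranspose_same (B - (t : ℂ) • A)).nonneg
  have hexpand : (W * ((B - (t : ℂ) • A) * R * (B - (t : ℂ) • A))).trace
      = (W * (B * R * B)).trace + t ^ 2 * (W * R * A * A).trace
        - 2 * t * (Omega (W * R) A * B).trace := by
    simp only [Matrix.mul_sub, Matrix.sub_mul, Matrix.mul_smul, Matrix.smul_mul, trace_sub,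
      trace_smul, smul_eq_mul, hBRA, hARX, hARA, trace_Omega_mul]
    ring
  rwa [hexpand, sub_nonneg] at hquad

theorem trace_Omega_mul_self_le [DecidableEq m] {τ W R A B : Matrix m m ℂ} {c l : ℝ} (hc : 0 < c)
    (hW : 0 ≤ W) (hR : 0 ≤ R) (hR1 : R ≤ 1) (hWR : Commute W R) (hWA : Commute W A)
    (hτ : (c : ℂ) • W ≤ τ) (hA : A.IsHermitian) (hB : B.IsHermitian)
    (hAB : Omega τ B = (l : ℂ) • Omega (W * R) A) :
    (Omega τ B * B).trace ≤ ((l ^ 2 / c : ℝ) : ℂ) * (W * R * A * A).trace := by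
  have hBRB : B * R * B ≤ B * B := by
    simpa only [star_eq_conjTranspose, hB.eq, Matrix.mul_one] using
      star_right_conjugate_le_conjugate hR1 B
  have hBB : 0 ≤ B * B := by
    simpa [hB.eq] using (posSemidef_self_mul_conjTranspose B).nonneg
  have hlower : c * (W * (B * R * B)).trace ≤ (Omega τ B * B).trace := calc
    _ ≤ c * (W * (B * B)).trace := by
      gcongr
      exact trace_mul_le_trace_mul_left hW hBRB
    _ = ((c : ℂ) • W * (B * B)).trace := by simp
    _ ≤ (τ * (B * B)).trace := trace_mul_le_trace_mul_right hBB hτ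
    _ = (Omega τ B * B).trace := (trace_Omega_mul_self τ B).symm
  have hyoung := two_mul_trace_Omega_mul_le hW hR hWR hWA hA hB (l / c)
  have hupper : 2 * (Omega τ B * B).trace
      ≤ c * (W * (B * R * B)).trace + ((l ^ 2 / c : ℝ) : ℂ) * (W * R * A * A).trace := by
    have hc' : (c : ℂ) ≠ 0 := by exact_mod_cast hc.ne'
    have hX : (Omega τ B * B).trace = l * (Omega (W * R) A * B).trace := by
      rw [hAB, Matrix.smul_mul, trace_smul, smul_eq_mul]
    convert mul_le_mul_of_nonneg_left hyoung (show 0 ≤ (c : ℂ) by exact_mod_cast hc.le) using 1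
    · rw [hX]; push_cast; field_simp
    · push_cast; field_simp
  linear_combination hlower + hupper

end Omega

section SiteProd

variable {d n : ℕ}

theorem tensorPow_eq_siteProd (ρ : Matrix (Fin d) (Fin d) ℂ) :
    tensorPow d n ρ = siteProd d n fun _ ↦ ρ := rfl

theorem siteProd_mul (a b : Fin n → Matrix (Fin d) (Fin d) ℂ) :
    siteProd d n a * siteProd d n b = siteProd d n (a * b) := by
  ext x z
  simp only [siteProd, Matrix.mul_apply, Pi.mul_apply, ← Finset.prod_mul_distrib]
  rw [Finset.prod_univ_sum, Fintype.piFinset_univ]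

theorem siteProd_one : siteProd d n 1 = 1 := by
  ext x z
  simp [siteProd, Matrix.one_apply, Fintype.prod_ite_zero, funext_iff]

theorem conjTranspose_siteProd (a : Fin n → Matrix (Fin d) (Fin d) ℂ) :
    (siteProd d n a)ᴴ = siteProd d n (star a) := by
  ext x z
  simp [siteProd, Matrix.conjTranspose_apply, Matrix.star_apply]

theorem trace_siteProd (a : Fin n → Matrix (Fin d) (Fin d) ℂ) :
    (siteProd d n a).trace = ∏ i, (a i).trace := by
  simp only [siteProd, Matrix.trace, Matrix.diag, Finset.prod_univ_sum, Fintype.piFinset_univ]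

theorem siteProd_update_apply (a : Fin n → Matrix (Fin d) (Fin d) ℂ) (i : Fin n)
    (b : Matrix (Fin d) (Fin d) ℂ) (x z : Fin n → Fin d) :
    siteProd d n (Function.update a i b) x z
      = b (x i) (z i) * ∏ j ∈ Finset.univ.erase i, a j (x j) (z j) := by
  rw [siteProd, ← Finset.mul_prod_erase _ _ (Finset.mem_univ i), Function.update_self]
  congr 1
  refine Finset.prod_congr rfl fun j hj ↦ ?_
  rw [Function.update_of_ne (Finset.ne_of_mem_erase hj)]

variable (d n) in
/-- The tensor product of single-site matrices as a multilinear map, giving access to the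
expansion lemmas of `MultilinearMap`. -/
def siteProdMultilinear : MultilinearMap ℂ (fun _ : Fin n ↦ Matrix (Fin d) (Fin d) ℂ)
    (Matrix (Fin n → Fin d) (Fin n → Fin d) ℂ) :=
  .mk' (siteProd d n)
    (fun a i b c ↦ by ext x z; simp only [siteProd_update_apply, Matrix.add_apply, add_mul])
    (fun a i r b ↦ by
      ext x z; simp only [siteProd_update_apply, Matrix.smul_apply, smul_eq_mul, mul_assoc])

theorem siteProd_add (a b : Fin n → Matrix (Fin d) (Fin d) ℂ) :
    siteProd d n (a + b) = ∑ s : Finset (Fin n), siteProd d n (s.piecewise a b) :=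
  (siteProdMultilinear d n).map_add_univ a b

theorem siteProd_piecewise_smul (S : Finset (Fin n)) (r : ℂ)
    (a : Fin n → Matrix (Fin d) (Fin d) ℂ) :
    siteProd d n (S.piecewise (r • a) a) = r ^ S.card • siteProd d n a := by
  rw [← Finset.prod_const]
  exact (siteProdMultilinear d n).map_piecewise_smul (fun _ ↦ r) a S

theorem siteProd_nonneg {a : Fin n → Matrix (Fin d) (Fin d) ℂ} (ha : 0 ≤ a) :
    0 ≤ siteProd d n a := by
  choose b hb using fun i ↦ CStarAlgebra.nonneg_iff_eq_star_mul_self.mp (ha i)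
  have hab : siteProd d n a = (siteProd d n b)ᴴ * siteProd d n b := by
    rw [conjTranspose_siteProd, siteProd_mul, funext hb]
    rfl
  exact hab ▸ (posSemidef_conjTranspose_mul_self _).nonneg

theorem siteProd_le_siteProd {a b : Fin n → Matrix (Fin d) (Fin d) ℂ} (ha : 0 ≤ a) (hab : a ≤ b) :
    siteProd d n a ≤ siteProd d n b := by
  have hsum : siteProd d n b = ∑ s : Finset (Fin n), siteProd d n (s.piecewise a (b - a)) := by
    rw [← siteProd_add, add_sub_cancel]
  have hnonneg (s : Finset (Fin n)) : 0 ≤ siteProd d n (s.piecewise a (b - a)) :=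
    siteProd_nonneg (s.le_piecewise_of_le_of_le ha (sub_nonneg.mpr hab))
  have hsingle := Finset.single_le_sum (fun s _ ↦ hnonneg s) (Finset.mem_univ Finset.univ)
  rwa [Finset.piecewise_univ, ← hsum] at hsingle

end SiteProd

section LocalOperators

variable {d n : ℕ} {S : Finset (Fin n)}

variable (d) in
/-- The operators supported on the sites of `S`: the span of the products acting as the identity
off `S`. -/
def localOperators (S : Finset (Fin n)) :
    Submodule ℂ (Matrix (Fin n → Fin d) (Fin n → Fin d) ℂ) :=
  Submodule.span ℂ (siteProd d n '' {a | ∀ i ∉ S, a i = 1})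

theorem siteProd_mem_localOperators {a : Fin n → Matrix (Fin d) (Fin d) ℂ}
    (ha : ∀ i ∉ S, a i = 1) : siteProd d n a ∈ localOperators d S :=
  Submodule.subset_span ⟨a, ha, rfl⟩

theorem TS_le_localOperators (ρ : Matrix (Fin d) (Fin d) ℂ) :
    TS d n ρ S ≤ localOperators d S :=
  Submodule.span_le.mpr fun _ ⟨_, _, ha, hM⟩ ↦ hM ▸ siteProd_mem_localOperators ha

theorem mul_mem_localOperators {A B : Matrix (Fin n → Fin d) (Fin n → Fin d) ℂ}
    (hA : A ∈ localOperators d S) (hB : B ∈ localOperators d S) :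
    A * B ∈ localOperators d S := by
  have hAB := Submodule.mul_mem_mul hA hB
  rw [localOperators, Submodule.span_mul_span] at hAB
  refine Submodule.span_le.mpr ?_ hAB
  rintro _ ⟨_, ⟨a, ha, rfl⟩, _, ⟨b, hb, rfl⟩, rfl⟩
  change siteProd d n a * siteProd d n b ∈ localOperators d S
  rw [siteProd_mul]
  exact siteProd_mem_localOperators fun i hi ↦ by simp [ha i hi, hb i hi]

theorem commute_siteProd_of_mem_localOperators {w : Fin n → Matrix (Fin d) (Fin d) ℂ}
    (hw : ∀ i ∈ S, w i = 1) {A : Matrix (Fin n → Fin d) (Fin n → Fin d) ℂ}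
    (hA : A ∈ localOperators d S) : Commute (siteProd d n w) A := by
  refine LinearMap.eqOn_span (f := LinearMap.mulLeft ℂ (siteProd d n w))
    (g := LinearMap.mulRight ℂ (siteProd d n w)) ?_ hA
  rintro _ ⟨a, ha, rfl⟩
  have hcomm : w * a = a * w := funext fun i ↦ by
    by_cases hi : i ∈ S
    · simp [hw i hi]
    · simp [ha i hi]
  simp only [LinearMap.mulLeft_apply, LinearMap.mulRight_apply, siteProd_mul, hcomm]

theorem trace_siteProd_mul_eq_of_mem_localOperators {p q : Fin n → Matrix (Fin d) (Fin d) ℂ}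
    (hS : ∀ i ∈ S, p i = q i) (htr : ∀ i ∉ S, (p i).trace = (q i).trace)
    {A : Matrix (Fin n → Fin d) (Fin n → Fin d) ℂ} (hA : A ∈ localOperators d S) :
    (siteProd d n p * A).trace = (siteProd d n q * A).trace := by
  refine LinearMap.eqOn_span
    (f := traceLinearMap _ ℂ ℂ ∘ₗ LinearMap.mulLeft ℂ (siteProd d n p))
    (g := traceLinearMap _ ℂ ℂ ∘ₗ LinearMap.mulLeft ℂ (siteProd d n q)) ?_ hA
  rintro _ ⟨a, ha, rfl⟩
  simp only [LinearMap.comp_apply, LinearMap.mulLeft_apply, traceLinearMap_apply, siteProd_mul,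
    trace_siteProd]
  refine Finset.prod_congr rfl fun i _ ↦ ?_
  by_cases hi : i ∈ S
  · simp [hS i hi]
  · simp [ha i hi, htr i hi]

end LocalOperators

section Depolarizing

variable {d n : ℕ} {y : ℝ}

variable (d y) in
/-- The single-site depolarizing channel `D_y`. -/
def depol (A : Matrix (Fin d) (Fin d) ℂ) : Matrix (Fin d) (Fin d) ℂ :=
  ((y⁻¹ : ℝ) : ℂ) • A + (((1 - y⁻¹ : ℝ) : ℂ) / d * A.trace) • 1

theorem depol_of_trace_eq_zero {A : Matrix (Fin d) (Fin d) ℂ} (hA : A.trace = 0) :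
    depol d y A = ((y⁻¹ : ℝ) : ℂ) • A := by
  simp [depol, hA]

theorem trace_depol (hd : d ≠ 0) (A : Matrix (Fin d) (Fin d) ℂ) :
    (depol d y A).trace = A.trace := by
  have hd' : (d : ℂ) ≠ 0 := Nat.cast_ne_zero.mpr hd
  simp only [depol, trace_add, trace_smul, trace_one, Fintype.card_fin, smul_eq_mul]
  push_cast
  field_simp
  ring

theorem smul_one_le_depol (hy : 0 ≤ y) {ρ : Matrix (Fin d) (Fin d) ℂ} (hρ : 0 ≤ ρ) :
    (((1 - y⁻¹ : ℝ) : ℂ) / d * ρ.trace) • 1 ≤ depol d y ρ :=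
  le_add_of_nonneg_left (smul_nonneg (by exact_mod_cast inv_nonneg.mpr hy) hρ)

theorem depolSite_siteProd (i : Fin n) (a : Fin n → Matrix (Fin d) (Fin d) ℂ) :
    depolSite d n y i (siteProd d n a)
      = siteProd d n (Function.update a i (depol d y (a i))) := by
  ext x z
  have hsite (u v : Fin d) :
      siteProd d n a (Function.update x i u) (Function.update z i v)
        = a i u v * ∏ j ∈ Finset.univ.erase i, a j (x j) (z j) := by
    rw [siteProd, ← Finset.mul_prod_erase _ _ (Finset.mem_univ i)]
    congr 1
    · simp only [Function.update_self]
    · refine Finset.prod_congr rfl fun j hj ↦ ?_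
      simp only [Function.update_of_ne (Finset.ne_of_mem_erase hj)]
  have hxz := hsite (x i) (z i)
  simp only [Function.update_eq_self] at hxz
  simp only [depolSite, siteProd_update_apply, hsite, hxz, ← Finset.sum_mul, depol, trace, diag,
    Matrix.add_apply, Matrix.smul_apply, smul_eq_mul, Matrix.one_apply]
  split_ifs <;> ring

theorem depolPow_siteProd (a : Fin n → Matrix (Fin d) (Fin d) ℂ) :
    depolPow d n y (siteProd d n a) = siteProd d n (fun i ↦ depol d y (a i)) := by
  have hfoldr (l : List (Fin n)) (hl : l.Nodup) :
      l.foldr (fun i f ↦ depolSite d n y i ∘ f) id (siteProd d n a)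
        = siteProd d n (l.toFinset.piecewise (fun i ↦ depol d y (a i)) a) := by
    induction l with
    | nil => rw [List.toFinset_nil, Finset.piecewise_empty]; rfl
    | cons i l ih =>
      obtain ⟨hil, hl⟩ := List.nodup_cons.mp hl
      rw [List.foldr_cons, Function.comp_apply, ih hl, depolSite_siteProd,
        Finset.piecewise_eq_of_notMem _ _ _ (by simpa using hil), List.toFinset_cons,
        Finset.piecewise_insert]
  rw [depolPow, hfoldr _ (List.nodup_finRange n), List.toFinset_finRange, Finset.piecewise_univ]

theorem depolPow_tensorPow (ρ : Matrix (Fin d) (Fin d) ℂ) :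
    depolPow d n y (tensorPow d n ρ) = tensorPow d n (depol d y ρ) :=
  depolPow_siteProd fun _ ↦ ρ

theorem isLinearMap_depolSite (i : Fin n) : IsLinearMap ℂ (depolSite d n y i) where
  map_add A B := by
    ext x z
    simp only [depolSite, Matrix.add_apply, Finset.sum_add_distrib]
    split_ifs <;> ring
  map_smul c A := by
    ext x z
    simp only [depolSite, Matrix.smul_apply, smul_eq_mul, ← Finset.mul_sum]
    split_ifs <;> ring

theorem isLinearMap_depolPow : IsLinearMap ℂ (depolPow d n y) := by
  unfold depolPow
  induction List.finRange n with
  | nil => exact LinearMap.id.isLinear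
  | cons i l ih => exact ((isLinearMap_depolSite i).mk' _ ∘ₗ ih.mk' _).isLinear

theorem depolPow_siteProd_eq_smul_siteProd {S : Finset (Fin n)}
    {a b : Fin n → Matrix (Fin d) (Fin d) ℂ} (ha : ∀ i ∈ S, (a i).trace = 0)
    (hbS : ∀ i ∈ S, b i = a i) (hb : ∀ i ∉ S, b i = depol d y (a i)) :
    depolPow d n y (siteProd d n a) = ((y⁻¹ : ℝ) : ℂ) ^ S.card • siteProd d n b := by
  rw [depolPow_siteProd, ← siteProd_piecewise_smul]
  congr 1
  funext i
  by_cases hi : i ∈ S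
  · simp [hi, depol_of_trace_eq_zero (ha i hi), hbS]
  · simp [hi, hb]

theorem depolPow_Omega_tensorPow {ρ : Matrix (Fin d) (Fin d) ℂ} {S : Finset (Fin n)}
    {A : Matrix (Fin n → Fin d) (Fin n → Fin d) ℂ} (hA : A ∈ TS d n ρ S) :
    depolPow d n y (Omega (tensorPow d n ρ) A) = ((y⁻¹ : ℝ) : ℂ) ^ S.card •
      Omega (siteProd d n (S.piecewise (fun _ ↦ ρ) fun _ ↦ depol d y ρ)) A := by
  set P := siteProd d n (S.piecewise (fun _ ↦ ρ) fun _ ↦ depol d y ρ) with hP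
  refine LinearMap.eqOn_span
    (f := isLinearMap_depolPow.mk' (depolPow d n y) ∘ₗ (isLinearMap_Omega (tensorPow d n ρ)).mk' _)
    (g := ((y⁻¹ : ℝ) : ℂ) ^ S.card • (isLinearMap_Omega P).mk' _) ?_ hA
  rintro _ ⟨a, haS, ha1, rfl⟩
  have hleft : depolPow d n y (tensorPow d n ρ * siteProd d n a)
      = ((y⁻¹ : ℝ) : ℂ) ^ S.card • (P * siteProd d n a) := by
    rw [tensorPow_eq_siteProd, hP, siteProd_mul, siteProd_mul]
    exact depolPow_siteProd_eq_smul_siteProd haS (by simp +contextual) (by simp +contextual [ha1])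
  have hright : depolPow d n y (siteProd d n a * tensorPow d n ρ)
      = ((y⁻¹ : ℝ) : ℂ) ^ S.card • (siteProd d n a * P) := by
    rw [tensorPow_eq_siteProd, hP, siteProd_mul, siteProd_mul]
    exact depolPow_siteProd_eq_smul_siteProd (fun i hi ↦ (trace_mul_comm _ _).trans (haS i hi))
      (by simp +contextual) (by simp +contextual [ha1])
  simp only [LinearMap.comp_apply, LinearMap.smul_apply, IsLinearMap.mk'_apply, Omega,
    isLinearMap_depolPow.map_smul, isLinearMap_depolPow.map_add, hleft, hright]
  module

end Depolarizing

section ProductState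

variable {d n : ℕ} {S : Finset (Fin n)}

theorem smul_siteProd_piecewise_one_le {a : Fin n → Matrix (Fin d) (Fin d) ℂ} (ha : 0 ≤ a)
    {c : ℂ} (hc : 0 ≤ c) (hca : ∀ i ∈ S, c • 1 ≤ a i) :
    c ^ S.card • siteProd d n (S.piecewise 1 a) ≤ siteProd d n a := by
  rw [← siteProd_piecewise_smul]
  refine siteProd_le_siteProd (fun i ↦ ?_) fun i ↦ ?_
  · by_cases hi : i ∈ S
    · simpa [hi] using smul_nonneg hc zero_le_one
    · simpa [hi] using ha i
  · by_cases hi : i ∈ S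
    · simpa [hi] using hca i hi
    · simp [hi]

theorem trace_Omega_tensorPow_mul_self_le {ρ σ : Matrix (Fin d) (Fin d) ℂ} (hρ : 0 ≤ ρ)
    (hρ1 : ρ ≤ 1) (htr : σ.trace = ρ.trace) {c l : ℝ} (hc : 0 < c) (hcσ : (c : ℂ) • 1 ≤ σ)
    {A B : Matrix (Fin n → Fin d) (Fin n → Fin d) ℂ} (hA : A.IsHermitian) (hB : B.IsHermitian)
    (hAS : A ∈ localOperators d S)
    (hAB : Omega (tensorPow d n σ) B
      = (l : ℂ) • Omega (siteProd d n (S.piecewise (fun _ ↦ ρ) fun _ ↦ σ)) A) :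
    (Omega (tensorPow d n σ) B * B).trace
      ≤ ((l ^ 2 / c ^ S.card : ℝ) : ℂ) * (tensorPow d n ρ * A * A).trace := by
  have hc' : (0 : ℂ) ≤ c := by exact_mod_cast hc.le
  have hσ : 0 ≤ σ := (smul_nonneg hc' zero_le_one).trans hcσ
  set P := siteProd d n (S.piecewise (fun _ ↦ ρ) fun _ ↦ σ) with hP
  set W := siteProd d n (S.piecewise 1 fun _ ↦ σ) with hW
  set R := siteProd d n (S.piecewise (fun _ ↦ ρ) 1) with hR
  have hWR : W * R = P := by
    rw [hW, hR, hP, siteProd_mul]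
    congr 1
    funext i
    by_cases hi : i ∈ S <;> simp [hi]
  have hW_comm {X : Matrix (Fin n → Fin d) (Fin n → Fin d) ℂ} (hX : X ∈ localOperators d S) :
      Commute W X :=
    commute_siteProd_of_mem_localOperators (fun i hi ↦ by simp [hi]) hX
  have hW0 : 0 ≤ W := siteProd_nonneg
    (S.le_piecewise_of_le_of_le (fun _ ↦ zero_le_one) fun _ ↦ hσ)
  have hR0 : 0 ≤ R := siteProd_nonneg
    (S.le_piecewise_of_le_of_le (fun _ ↦ hρ) fun _ ↦ zero_le_one)
  have hR1 : R ≤ 1 := siteProd_one (d := d) (n := n) ▸ siteProd_le_siteProd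
    (S.le_piecewise_of_le_of_le (fun _ ↦ hρ) fun _ ↦ zero_le_one)
    (S.piecewise_le_of_le_of_le (fun _ ↦ hρ1) le_rfl)
  have hR_mem : R ∈ localOperators d S := siteProd_mem_localOperators fun i hi ↦ by simp [hi]
  have hWσ : ((c ^ S.card : ℝ) : ℂ) • W ≤ tensorPow d n σ := by
    rw [Complex.ofReal_pow]
    exact smul_siteProd_piecewise_one_le (fun _ ↦ hσ) hc' fun _ _ ↦ hcσ
  have htrace : (P * A * A).trace = (tensorPow d n ρ * A * A).trace := by
    simp only [Matrix.mul_assoc]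
    exact trace_siteProd_mul_eq_of_mem_localOperators (fun i hi ↦ by simp [hi])
      (fun i hi ↦ by simp [hi, htr]) (mul_mem_localOperators hAS hAS)
  rw [← htrace, ← hWR]
  exact trace_Omega_mul_self_le (pow_pos hc _) hW0 hR0 hR1 (hW_comm hR_mem) (hW_comm hAS) hWσ
    hA hB (hWR ▸ hAB)

end ProductState

/-- bound on the coarse-grained Bures norm under `D_y^{⊗n}`
for Hermitian elements of `T_Σ` with `|Σ| = k`. -/
theorem TS_contraction_bound
    (d n k : ℕ) (hd : 1 ≤ d) (hn : 1 ≤ n)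
    (ρ : Matrix (Fin d) (Fin d) ℂ) (hρ : ρ.PosSemidef) (hρtr : ρ.trace = 1)
    (y : ℝ) (hy : 1 < y)
    (S : Finset (Fin n)) (hS : S.card = k)
    (A : Matrix (Fin n → Fin d) (Fin n → Fin d) ℂ) (hA : A.IsHermitian)
    (hATS : A ∈ TS d n ρ S)
    (B : Matrix (Fin n → Fin d) (Fin n → Fin d) ℂ) (hB : B.IsHermitian)
    (hΩB : Omega (depolPow d n y (tensorPow d n ρ)) B
        = depolPow d n y (Omega (tensorPow d n ρ) A)) :
    (depolPow d n y (Omega (tensorPow d n ρ) A) * B).trace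
      ≤ (((d : ℝ) ^ k * y ^ (-(2 * (k : ℤ))) * (1 - y⁻¹) ^ (-(k : ℤ)) : ℝ) : ℂ)
        * (tensorPow d n ρ * A * A).trace := by
  subst hS
  have hd0 : (0 : ℝ) < d := by exact_mod_cast hd
  have hy0 : 0 < y := by linarith
  have hy1 : 0 < 1 - y⁻¹ := sub_pos.mpr (inv_lt_one_of_one_lt₀ hy)
  have hρ1 : ρ ≤ 1 := by simpa [hρtr] using le_trace_smul_one hρ.nonneg
  have hσ : (((1 - y⁻¹) / d : ℝ) : ℂ) • 1 ≤ depol d y ρ := by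
    simpa [hρtr] using smul_one_le_depol hy0.le hρ.nonneg
  have hconst : (d : ℝ) ^ S.card * y ^ (-(2 * (S.card : ℤ))) * (1 - y⁻¹) ^ (-(S.card : ℤ))
      = (y⁻¹ ^ S.card) ^ 2 / ((1 - y⁻¹) / d) ^ S.card := by
    rw [_root_.zpow_neg, _root_.zpow_neg, mul_comm 2, _root_.zpow_mul, zpow_natCast, zpow_natCast,
      div_pow, inv_pow]
    norm_cast
    field_simp
  rw [← hΩB, hconst, depolPow_tensorPow]
  refine trace_Omega_tensorPow_mul_self_le hρ.nonneg hρ1 (trace_depol (by lia) ρ)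
    (div_pos hy1 hd0) hσ hA hB (TS_le_localOperators ρ hATS) ?_
  rw [← depolPow_tensorPow, hΩB, depolPow_Omega_tensorPow hATS, Complex.ofReal_pow]
end
end

section
/- Let ρ be a d×d complex density matrix, let y ≠ 0 be real, let k ≥ 1, and let a₁,…,a_k be d×d matrices with Tr(ρ aᵢ) = 0 for every i. Then the site-wise depolarizing channel acts as the scalar y^(−k) on the corresponding Ω-vector: D_y^⊗k( Ω_{ρ^⊗k}(a₁⊗…⊗a_k) ) = y^(−k) · Ω_{ρ^⊗k}(a₁⊗…⊗a_k). -/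
open scoped ComplexOrder
open Matrix

noncomputable section

/-!
The channel `D_y` rescales every operator whose trace vanishes by `y⁻¹`. Since `ρ^⊗k` and
`a₁ ⊗ ⋯ ⊗ a_k` multiply factor by factor, `Ω` is half the sum of `⊗ᵢ ρ aᵢ` and `⊗ᵢ aᵢ ρ`, in which
every factor is traceless. Hence all single-site partial traces of `Ω` vanish, and each of the `k`
sites contributes one factor `y⁻¹`.
-/

section PartialTrace

variable {ι m R : Type*} [DecidableEq ι] [Fintype m] [Semiring R]

/-- The partial trace over site `i`, kept as a matrix on all sites (it does not depend on the
`i`-th coordinates of its indices) so that no reindexing of the remaining sites is needed. -/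
def partialTrace (i : ι) : Matrix (ι → m) (ι → m) R →ₗ[R] Matrix (ι → m) (ι → m) R where
  toFun M := fun x z => ∑ b, M (Function.update x i b) (Function.update z i b)
  map_add' M N := by
    ext x z
    exact Finset.sum_add_distrib
  map_smul' c M := by
    ext x z
    exact (Finset.mul_sum _ _ _).symm

theorem partialTrace_apply (i : ι) (M : Matrix (ι → m) (ι → m) R) (x z : ι → m) :
    partialTrace i M x z = ∑ b, M (Function.update x i b) (Function.update z i b) :=
  rfl

end PartialTrace

section SiteProd

variable {d n : ℕ}

theorem siteProd_mul_siteProd (A B : Fin n → Matrix (Fin d) (Fin d) ℂ) :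
    siteProd d n A * siteProd d n B = siteProd d n fun i => A i * B i := by
  ext x z
  simp only [siteProd, Matrix.mul_apply, ← Finset.prod_mul_distrib, Finset.prod_univ_sum,
    Fintype.piFinset_univ]

theorem siteProd_update_update (A : Fin n → Matrix (Fin d) (Fin d) ℂ) (i : Fin n)
    (x z : Fin n → Fin d) (b c : Fin d) :
    siteProd d n A (Function.update x i b) (Function.update z i c) =
      A i b c * ∏ j ∈ Finset.univ.erase i, A j (x j) (z j) := by
  rw [siteProd, ← Finset.mul_prod_erase _ _ (Finset.mem_univ i), Function.update_self,
    Function.update_self]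
  congr 1
  refine Finset.prod_congr rfl fun j hj => ?_
  have hji : j ≠ i := Finset.ne_of_mem_erase hj
  rw [Function.update_of_ne hji, Function.update_of_ne hji]

theorem partialTrace_siteProd_apply (A : Fin n → Matrix (Fin d) (Fin d) ℂ) (i : Fin n)
    (x z : Fin n → Fin d) :
    partialTrace i (siteProd d n A) x z =
      (A i).trace * ∏ j ∈ Finset.univ.erase i, A j (x j) (z j) := by
  simp only [partialTrace_apply, siteProd_update_update, ← Finset.sum_mul, Matrix.trace,
    Matrix.diag_apply]

theorem partialTrace_siteProd_eq_zero {A : Fin n → Matrix (Fin d) (Fin d) ℂ} {i : Fin n}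
    (hA : (A i).trace = 0) : partialTrace i (siteProd d n A) = 0 := by
  ext x z
  rw [partialTrace_siteProd_apply, hA, zero_mul, Matrix.zero_apply]

theorem partialTrace_Omega_siteProd_eq_zero {ρ a : Fin n → Matrix (Fin d) (Fin d) ℂ} {i : Fin n}
    (h : (ρ i * a i).trace = 0) :
    partialTrace i (Omega (siteProd d n ρ) (siteProd d n a)) = 0 := by
  have h' : (a i * ρ i).trace = 0 := (Matrix.trace_mul_comm _ _).trans h
  rw [Omega, siteProd_mul_siteProd, siteProd_mul_siteProd, map_smul, map_add,
    partialTrace_siteProd_eq_zero h, partialTrace_siteProd_eq_zero h', add_zero, smul_zero]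

end SiteProd

section Depolarizing

variable {d n : ℕ} {M : Matrix (Fin n → Fin d) (Fin n → Fin d) ℂ}

theorem depolSite_apply (y : ℝ) (i : Fin n) (M : Matrix (Fin n → Fin d) (Fin n → Fin d) ℂ)
    (x z : Fin n → Fin d) :
    depolSite d n y i M x z = ((y⁻¹ : ℝ) : ℂ) * M x z +
      ((1 - y⁻¹ : ℝ) : ℂ) / (d : ℂ) * (if x i = z i then partialTrace i M x z else 0) :=
  rfl

theorem depolSite_of_partialTrace_eq_zero (y : ℝ) {i : Fin n} (hM : partialTrace i M = 0) :
    depolSite d n y i M = ((y⁻¹ : ℝ) : ℂ) • M := by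
  ext x z
  rw [depolSite_apply, hM, Matrix.zero_apply, ite_self, mul_zero, add_zero, Matrix.smul_apply,
    smul_eq_mul]

theorem foldr_depolSite_of_partialTrace_eq_zero (y : ℝ) (l : List (Fin n))
    (hM : ∀ i ∈ l, partialTrace i M = 0) :
    l.foldr (fun i f => depolSite d n y i ∘ f) id M = ((y⁻¹ : ℝ) : ℂ) ^ l.length • M := by
  induction l with
  | nil => rw [List.foldr_nil, id, List.length_nil, pow_zero, one_smul]
  | cons i l ih =>
    obtain ⟨hi, hl⟩ := List.forall_mem_cons.mp hM
    have h_scaled : partialTrace i (((y⁻¹ : ℝ) : ℂ) ^ l.length • M) = 0 := by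
      rw [map_smul, hi, smul_zero]
    rw [List.foldr_cons, Function.comp_apply, ih hl, depolSite_of_partialTrace_eq_zero y h_scaled,
      smul_smul, List.length_cons, pow_succ']

theorem depolPow_of_partialTrace_eq_zero (y : ℝ) (hM : ∀ i, partialTrace i M = 0) :
    depolPow d n y M = ((y⁻¹ : ℝ) : ℂ) ^ n • M := by
  rw [depolPow, foldr_depolSite_of_partialTrace_eq_zero y _ fun i _ => hM i, List.length_finRange]

end Depolarizing

theorem depol_eigenvector_general {d k : ℕ} (ρ : Fin k → Matrix (Fin d) (Fin d) ℂ)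
    {y : ℝ} (_hy : y ≠ 0) (a : Fin k → Matrix (Fin d) (Fin d) ℂ)
    (ha : ∀ i, (ρ i * a i).trace = 0) :
    depolPow d k y (Omega (siteProd d k ρ) (siteProd d k a)) =
      ((y ^ (-(k : ℤ)) : ℝ) : ℂ) • Omega (siteProd d k ρ) (siteProd d k a) := by
  have h_scalar : y ^ (-(k : ℤ)) = y⁻¹ ^ k := by
    rw [_root_.zpow_neg, _root_.zpow_natCast, _root_.inv_pow]
  rw [depolPow_of_partialTrace_eq_zero y fun i => partialTrace_Omega_siteProd_eq_zero (ha i),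
    h_scalar, Complex.ofReal_pow]

/-- the site-wise depolarizing channel acts as the scalar `y^{-k}` on
`Ω_{ρ^{⊗k}}(a₁ ⊗ ⋯ ⊗ a_k)` for ρ-traceless `aᵢ`. -/
theorem depol_eigenvector
    (d k : ℕ) (hd : 1 ≤ d) (hk : 1 ≤ k)
    (ρ : Matrix (Fin d) (Fin d) ℂ) (hρ : ρ.PosSemidef) (hρtr : ρ.trace = 1)
    (y : ℝ) (hy : y ≠ 0)
    (a : Fin k → Matrix (Fin d) (Fin d) ℂ) (ha : ∀ i, (ρ * a i).trace = 0) :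
    depolPow d k y (Omega (tensorPow d k ρ) (siteProd d k a))
      = (((y ^ (-(k : ℤ)) : ℝ)) : ℂ) • Omega (tensorPow d k ρ) (siteProd d k a) :=
  depol_eigenvector_general (fun _ => ρ) hy a ha
end
end

section
/- Let ρ be a d×d complex density matrix and let α, β be d×d complex matrices with Tr(ρα) = 0 and Tr(ρβ) = 0. Then, as n → ∞, the GNS inner products Tr( ρ^⊗n · (G_α^{(n)})† · G_β^{(n)} ) converge to exp( Tr(ρ · α† · β) ) (a quantum central limit for the vertex operators G). -/
open scoped ComplexOrder
open Matrix

noncomputable section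

/-! The trace of a tensor power is a power of the trace, so the inner product is the `n`-th
power of a single-site trace. With `c = i/√n`, the latter expands to
`Tr ρ + star c * Tr(ρα†) + c * Tr(ρβ) + star c * c * Tr(ρα†β)`. Since `star c = -c` and
`star c * c = 1/n`, the first-order terms cancel as soon as `Tr(ρα†) = Tr(ρβ)`, leaving
`(1 + Tr(ρα†β)/n)^n`. -/

section PiKronecker

variable {ι R : Type*} {l m n : ι → Type*}

/-- The tensor (Kronecker) product of a finite family of matrices, which are allowed to be
rectangular and of different sizes; its rows and columns are indexed by dependent tuples.
On a constant family indexed by `Fin n` it is the `n`-fold tensor power, `tensorPow d n` for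
`d × d` matrices. -/
def piKronecker [Fintype ι] [CommMonoid R] (A : ∀ i, Matrix (l i) (m i) R) :
    Matrix (∀ i, l i) (∀ i, m i) R :=
  of fun x z => ∏ i, A i (x i) (z i)

lemma piKronecker_mul [Fintype ι] [DecidableEq ι] [CommSemiring R] [∀ i, Fintype (m i)]
    (A : ∀ i, Matrix (l i) (m i) R) (B : ∀ i, Matrix (m i) (n i) R) :
    piKronecker A * piKronecker B = piKronecker fun i => A i * B i := by
  ext x z
  simp only [piKronecker, mul_apply, of_apply, Fintype.prod_sum, Finset.prod_mul_distrib]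

lemma conjTranspose_piKronecker [Fintype ι] [CommMonoid R] [StarMul R]
    (A : ∀ i, Matrix (l i) (m i) R) :
    (piKronecker A)ᴴ = piKronecker fun i => (A i)ᴴ := by
  ext x z
  simp only [piKronecker, conjTranspose_apply, of_apply, star_prod]

lemma trace_piKronecker [Fintype ι] [DecidableEq ι] [CommSemiring R] [∀ i, Fintype (m i)]
    (A : ∀ i, Matrix (m i) (m i) R) :
    (piKronecker A).trace = ∏ i, (A i).trace := by
  simp only [piKronecker, trace, diag_apply, of_apply, Fintype.prod_sum]

end PiKronecker

section SingleSite

variable {m R : Type*} [Fintype m] [CommSemiring R] [StarRing R]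

lemma trace_mul_conjTranspose_eq_star_of_isHermitian {ρ : Matrix m m R} (hρ : ρ.IsHermitian)
    (A : Matrix m m R) : (ρ * Aᴴ).trace = star (ρ * A).trace := by
  rw [← trace_conjTranspose, conjTranspose_mul, hρ.eq, trace_mul_comm]

lemma trace_mul_conjTranspose_one_add_smul_mul_one_add_smul [DecidableEq m] (c : R)
    (ρ α β : Matrix m m R) :
    (ρ * (1 + c • α)ᴴ * (1 + c • β)).trace =
      ρ.trace + star c * (ρ * αᴴ).trace + c * (ρ * β).trace +
        star c * c * (ρ * αᴴ * β).trace := by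
  simp only [conjTranspose_add, conjTranspose_one, conjTranspose_smul, mul_add, add_mul, mul_one,
    Matrix.mul_smul, Matrix.smul_mul, trace_add, trace_smul, smul_eq_mul]
  ring

end SingleSite

section VertexOperator

lemma star_I_div_ofReal (x : ℝ) : star (Complex.I / x) = -(Complex.I / x) := by
  simp only [Complex.star_def, map_div₀, Complex.conj_I, Complex.conj_ofReal, neg_div]

lemma star_I_div_sqrt_mul_self (n : ℕ) :
    star (Complex.I / (√n : ℂ)) * (Complex.I / (√n : ℂ)) = 1 / n := by
  have sqrt_mul_sqrt : (√n : ℂ) * (√n : ℂ) = n := by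
    exact_mod_cast Real.mul_self_sqrt n.cast_nonneg
  rw [star_I_div_ofReal, neg_mul, div_mul_div_comm, Complex.I_mul_I, sqrt_mul_sqrt, neg_div,
    neg_neg]

variable {m : Type*} [DecidableEq m]

/-- The vertex operator `(I + (i/√n)α)^{⊗n}` of a single-site matrix `α` over an arbitrary
index type `m`; `GVertex d n` is definitionally the case `m = Fin d`. For `n = 0` the coefficient
`i/√n` is `0` by the convention for division. -/
def vertexOperator (n : ℕ) (α : Matrix m m ℂ) : Matrix (Fin n → m) (Fin n → m) ℂ :=
  piKronecker fun _ => 1 + (Complex.I / (√n : ℂ)) • α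

variable [Fintype m]

lemma trace_piKronecker_mul_vertexOperator (n : ℕ) {ρ α β : Matrix m m ℂ}
    (hρ : ρ.trace = 1) (hαβ : (ρ * αᴴ).trace = (ρ * β).trace) :
    (piKronecker (fun _ : Fin n => ρ) * (vertexOperator n α)ᴴ * vertexOperator n β).trace =
      (1 + (ρ * αᴴ * β).trace / n) ^ n := by
  rw [vertexOperator, vertexOperator, conjTranspose_piKronecker, piKronecker_mul, piKronecker_mul,
    trace_piKronecker, Fin.prod_const, trace_mul_conjTranspose_one_add_smul_mul_one_add_smul,
    star_I_div_sqrt_mul_self, star_I_div_ofReal, hρ, hαβ]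
  ring

theorem vertex_central_limit_general {ρ α β : Matrix m m ℂ}
    (hρ : ρ.trace = 1) (hαβ : (ρ * αᴴ).trace = (ρ * β).trace) :
    Filter.Tendsto
      (fun n : ℕ =>
        (piKronecker (fun _ : Fin n => ρ) * (vertexOperator n α)ᴴ * vertexOperator n β).trace)
      Filter.atTop (nhds (Complex.exp (ρ * αᴴ * β).trace)) := by
  simpa only [trace_piKronecker_mul_vertexOperator _ hρ hαβ] using
    Complex.tendsto_one_add_div_pow_exp (ρ * αᴴ * β).trace

end VertexOperator

/-- quantum central limit for the vertex operators: the GNS inner products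
converge to `exp(Tr(ρ α† β))` as `n → ∞`. -/
theorem vertex_central_limit
    (d : ℕ) (hd : 1 ≤ d)
    (ρ : Matrix (Fin d) (Fin d) ℂ) (hρ : ρ.PosSemidef) (hρtr : ρ.trace = 1)
    (α β : Matrix (Fin d) (Fin d) ℂ)
    (hα : (ρ * α).trace = 0) (hβ : (ρ * β).trace = 0) :
    Filter.Tendsto
      (fun n : ℕ => (tensorPow d n ρ * (GVertex d n α)ᴴ * GVertex d n β).trace)
      Filter.atTop (nhds (Complex.exp ((ρ * αᴴ * β).trace))) := by
  exact vertex_central_limit_general hρtr <| by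
    rw [trace_mul_conjTranspose_eq_star_of_isHermitian hρ.isHermitian, hα, hβ, star_zero]
end
end
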